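/- Let m ≥ 1, x ∈ (0,1), let a be real, b > 0, let β, α be nonnegative integers, and let θ₁ < θ₂ < ⋯ < θ_m be distinct real numbers. Then the integral over the ordered region {0 < y₁ < ⋯ < y_m < x} of ∏_{k=1}^m y_k^{β}(1−y_k)^{α} · ∏_{1≤i<j≤m}(y_j − y_i) · det[₁F₁(a; b; θ_j y_i)]_{i,j=1,…,m} with respect to dy₁⋯dy_m equals det[ φ_i(x, θ_j) ]_{i,j=1,…,m}, where φ_i(x, θ_j) = ∫₀ˣ y^{β+i−1}(1−y)^{α} ₁F₁(a; b; θ_j y) dy. -/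

import Mathlib

open MeasureTheory Finset

/-- The rising factorial `(a)_k = a(a+1)⋯(a+k−1)`, with `(a)_0 = 1`. -/
noncomputable def risingFactorial (a : ℝ) (k : ℕ) : ℝ :=
  ∏ i ∈ Finset.range k, (a + i)

/-- The confluent hypergeometric function `₁F₁(a; b; z) = ∑ (a)_k/((b)_k k!) z^k`. -/
noncomputable def oneF1 (a b z : ℝ) : ℝ :=
  ∑' k : ℕ, risingFactorial a k / (risingFactorial b k * (k.factorial : ℝ)) * z ^ k

lemma risingFactorial_pos {b : ℝ} (hb : 0 < b) (k : ℕ) : 0 < risingFactorial b k :=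
  Finset.prod_pos fun i _ => by positivity

lemma oneF1_summable (a b : ℝ) (hb : 0 < b) (R : ℝ) :
    Summable fun k : ℕ =>
      risingFactorial a k / (risingFactorial b k * (k.factorial : ℝ)) * R ^ k := by
  refine summable_of_ratio_norm_eventually_le (r := 1 / 2) (by norm_num) ?_
  set C : ℝ := |a| / b + 1 with hC
  obtain ⟨N, hN⟩ := exists_nat_gt (2 * (C * |R|))
  filter_upwards [Filter.eventually_ge_atTop N] with k hk
  have hkN : (N : ℝ) ≤ k := by exact_mod_cast hk
  have hbk : 0 < b + k := by positivity
  have hB := risingFactorial_pos hb k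
  have hf : (0 : ℝ) < k.factorial := by exact_mod_cast k.factorial_pos
  have e : risingFactorial a (k + 1) / (risingFactorial b (k + 1) * ((k + 1).factorial : ℝ))
        * R ^ (k + 1)
      = ((a + k) / (b + k) * R / (k + 1)) *
        (risingFactorial a k / (risingFactorial b k * (k.factorial : ℝ)) * R ^ k) := by
    have h1 : risingFactorial a (k + 1) = risingFactorial a k * (a + k) := by
      simp [risingFactorial, Finset.prod_range_succ]
    have h2 : risingFactorial b (k + 1) = risingFactorial b k * (b + k) := by
      simp [risingFactorial, Finset.prod_range_succ]
    rw [h1, h2, Nat.factorial_succ]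
    push_cast
    field_simp
    ring
  rw [e, norm_mul]
  refine mul_le_mul_of_nonneg_right ?_ (norm_nonneg _)
  rw [Real.norm_eq_abs, abs_div, abs_mul, abs_div, abs_of_pos hbk,
    abs_of_pos (by positivity : (0 : ℝ) < k + 1), div_le_iff₀ (by positivity)]
  have h3 : |a + k| / (b + k) ≤ C := by
    rw [div_le_iff₀ hbk]
    have h4 : |a + k| ≤ |a| + k := by
      simpa using abs_add_le a (k : ℝ)
    have h5 : C * (b + k) = |a| + b + |a| / b * k + k := by
      rw [hC]; field_simp; ring
    have : 0 ≤ |a| / b * k := by positivity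
    linarith
  have := mul_le_mul_of_nonneg_right h3 (abs_nonneg R)
  linarith

lemma oneF1_continuous (a b : ℝ) (hb : 0 < b) : Continuous (oneF1 a b) := by
  rw [continuous_iff_continuousAt]
  intro z
  have h : ContinuousOn (oneF1 a b) (Metric.closedBall 0 (|z| + 1)) := by
    unfold oneF1
    refine continuousOn_tsum (fun i => by fun_prop)
      ((oneF1_summable a b hb (|z| + 1)).norm) ?_
    intro n y hy
    rw [norm_mul, norm_mul, norm_pow, norm_pow]
    have hy' : ‖y‖ ≤ |z| + 1 := by simpa using hy
    have : ‖|z| + 1‖ = |z| + 1 := Real.norm_of_nonneg (by positivity)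
    rw [this]
    gcongr
  refine h.continuousAt (Metric.closedBall_mem_nhds_of_mem ?_)
  simp

lemma ae_injective (m : ℕ) : ∀ᵐ y : Fin m → ℝ, Function.Injective y := by
  have h : ∀ i j : Fin m, i ≠ j → ∀ᵐ y : Fin m → ℝ, y i ≠ y j := by
    intro i j hij
    let p : Submodule ℝ (Fin m → ℝ) :=
      LinearMap.ker (LinearMap.proj (R := ℝ) (φ := fun _ : Fin m => ℝ) i - LinearMap.proj j)
    have hp : p ≠ ⊤ := by
      intro h
      have : (Pi.single i 1 : Fin m → ℝ) ∈ p := by rw [h]; trivial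
      simp [p, Pi.single_apply, hij.symm] at this
    have := Measure.addHaar_submodule (volume : Measure (Fin m → ℝ)) p hp
    rw [ae_iff]
    convert this using 2
    ext y
    simp [p, sub_eq_zero]
  have h2 : ∀ᵐ y : Fin m → ℝ, ∀ i j : Fin m, i ≠ j → y i ≠ y j := by
    simp only [Filter.eventually_all]
    exact h
  filter_upwards [h2] with y hy i j hij
  by_contra hne
  exact hy i j hne hij

lemma measurableSet_strictMono (m : ℕ) : MeasurableSet {y : Fin m → ℝ | StrictMono y} := by
  have : {y : Fin m → ℝ | StrictMono y} = ⋂ i, ⋂ j, ⋂ (_ : i < j), {y | y i < y j} := by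
    ext y; simp [StrictMono]
  rw [this]
  refine MeasurableSet.iInter fun i => MeasurableSet.iInter fun j => MeasurableSet.iInter fun _ => ?_
  exact measurableSet_lt (measurable_pi_apply i) (measurable_pi_apply j)

lemma sum_perm_integral (m : ℕ) (ν : Measure ℝ) [SigmaFinite ν]
    (hac : ∀ᵐ y ∂(Measure.pi fun _ : Fin m => ν), Function.Injective y)
    (G : (Fin m → ℝ) → ℝ) (hG : Integrable G (Measure.pi fun _ : Fin m => ν)) :
    ∫ y in {y : Fin m → ℝ | StrictMono y}, (∑ σ : Equiv.Perm (Fin m), G (y ∘ σ))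
        ∂(Measure.pi fun _ : Fin m => ν)
      = ∫ y, G y ∂(Measure.pi fun _ : Fin m => ν) := by
  set μ := Measure.pi fun _ : Fin m => ν with hμ
  let e : Equiv.Perm (Fin m) → (Fin m → ℝ) ≃ᵐ (Fin m → ℝ) := fun σ =>
    MeasurableEquiv.arrowCongr' σ.symm (MeasurableEquiv.refl ℝ)
  have he : ∀ σ y, e σ y = y ∘ σ := fun σ y => rfl
  have hp : ∀ σ, MeasurePreserving (e σ) μ μ := fun σ =>
    measurePreserving_arrowCongr' (fun _ => ν) (fun _ => ν) σ.symm (MeasurableEquiv.refl ℝ)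
      (fun _ => MeasurePreserving.id ν)
  let S : Equiv.Perm (Fin m) → Set (Fin m → ℝ) := fun σ => {z | StrictMono (z ∘ σ.symm)}
  have hS : ∀ σ, MeasurableSet (S σ) := fun σ =>
    (e σ.symm).measurable (measurableSet_strictMono m)
  have hpre : ∀ σ, (e σ) ⁻¹' (S σ) = {y : Fin m → ℝ | StrictMono y} := by
    intro σ
    ext y
    simp [S, he, Function.comp_assoc]
  have hi : ∀ σ : Equiv.Perm (Fin m), Integrable (fun y => G (y ∘ σ)) μ := fun σ =>
    (hp σ).integrable_comp_of_integrable hG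
  rw [integral_finsetSum _ (fun σ _ => (hi σ).integrableOn)]
  have h1 : ∀ σ : Equiv.Perm (Fin m),
      ∫ y in {y : Fin m → ℝ | StrictMono y}, G (y ∘ σ) ∂μ = ∫ y in S σ, G y ∂μ := by
    intro σ
    rw [← hpre σ]
    exact (hp σ).setIntegral_preimage_emb (e σ).measurableEmbedding G (S σ)
  rw [Finset.sum_congr rfl fun σ _ => h1 σ]
  rw [← integral_iUnion_fintype hS ?_ (fun σ => hG.integrableOn)]
  · have : (⋃ σ, S σ) =ᵐ[μ] Set.univ := by
      rw [Filter.eventuallyEq_univ]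
      filter_upwards [hac] with y hy
      rw [Set.mem_iUnion]
      refine ⟨(Tuple.sort y).symm, ?_⟩
      exact (Tuple.monotone_sort y).strictMono_of_injective
        (hy.comp (Tuple.sort y).injective)
    rw [setIntegral_congr_set this, setIntegral_univ]
  · intro σ τ hst
    rw [Function.onFun, Set.disjoint_left]
    intro z hz hz'
    apply hst
    have hz1 : StrictMono (z ∘ σ.symm) := hz
    have hz2 : StrictMono (z ∘ τ.symm) := hz'
    have h := Tuple.unique_monotone (f := z) (σ := σ.symm) (τ := τ.symm) hz1.monotone hz2.monotone
    have hinj : Function.Injective z := by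
      have := hz1.injective.comp σ.injective
      simpa [Function.comp_assoc] using this
    have h3 : σ.symm = τ.symm := by
      ext i
      exact congrArg _ (hinj (congrFun h i))
    simpa using congrArg Equiv.symm h3

lemma andreief (m : ℕ) (ν : Measure ℝ) [SigmaFinite ν]
    (hac : ∀ᵐ y ∂(Measure.pi fun _ : Fin m => ν), Function.Injective y)
    (g f : Fin m → ℝ → ℝ) (hfg : ∀ i j, Integrable (fun t => g i t * f j t) ν) :
    ∫ y in {y : Fin m → ℝ | StrictMono y},
        Matrix.det (Matrix.of fun i j : Fin m => g j (y i)) *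
        Matrix.det (Matrix.of fun i j : Fin m => f j (y i)) ∂(Measure.pi fun _ : Fin m => ν)
      = Matrix.det (Matrix.of fun i j : Fin m => ∫ t, g i t * f j t ∂ν) := by
  let G : (Fin m → ℝ) → ℝ := fun y =>
    (∏ i, g i (y i)) * Matrix.det (Matrix.of fun i j : Fin m => f j (y i))
  have hGs : ∀ y, G y = ∑ σ : Equiv.Perm (Fin m),
      ((Equiv.Perm.sign σ : ℤ) : ℝ) * ∏ i, (g i (y i) * f (σ i) (y i)) := by
    intro y
    simp only [G]
    rw [← Matrix.det_transpose, Matrix.det_apply', Finset.mul_sum]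
    refine Finset.sum_congr rfl fun σ _ => ?_
    rw [Finset.prod_mul_distrib]
    simp only [Matrix.transpose_apply, Matrix.of_apply]
    ring
  have hterm : ∀ σ : Equiv.Perm (Fin m), Integrable (fun y : Fin m → ℝ =>
      ((Equiv.Perm.sign σ : ℤ) : ℝ) * ∏ i, (g i (y i) * f (σ i) (y i)))
      (Measure.pi fun _ : Fin m => ν) := fun σ =>
    (Integrable.fintype_prod (f := fun i t => g i t * f (σ i) t) (μ := fun _ => ν)
      (fun i => hfg i (σ i))).const_mul _
  have hG : Integrable G (Measure.pi fun _ : Fin m => ν) := by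
    rw [funext hGs]
    exact integrable_finset_sum _ fun σ _ => hterm σ
  have key := sum_perm_integral m ν hac G hG
  have hsum : ∀ y : Fin m → ℝ, ∑ σ : Equiv.Perm (Fin m), G (y ∘ σ) =
      Matrix.det (Matrix.of fun i j : Fin m => g j (y i)) *
        Matrix.det (Matrix.of fun i j : Fin m => f j (y i)) := by
    intro y
    rw [Matrix.det_apply' (Matrix.of fun i j : Fin m => g j (y i)), Finset.sum_mul]
    refine Finset.sum_congr rfl fun σ _ => ?_
    have := Matrix.det_permute σ (Matrix.of fun i j : Fin m => f j (y i))
    simp only [G, Function.comp]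
    have h2 : (Matrix.of fun i j : Fin m => f j (y (σ i))) =
      (Matrix.of fun i j : Fin m => f j (y i)).submatrix σ id := rfl
    rw [h2, this]
    simp only [Matrix.of_apply]
    ring
  simp only [hsum] at key
  rw [key, funext hGs, integral_finsetSum _ fun σ _ => hterm σ,
    ← Matrix.det_transpose, Matrix.det_apply']
  refine Finset.sum_congr rfl fun σ _ => ?_
  rw [integral_const_mul]
  congr 1
  exact integral_fintype_prod_eq_prod (fun i t => g i t * f (σ i) t)

/-- Evaluation, via the Andréief/Chiani identity, of the multiple ordered integral giving
`Pr{x_max ≤ x}` for the non-central F-matrix with distinct non-centrality eigenvalues: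
the integral over `{0 < y₁ < ⋯ < y_m < x}` of
`∏ y_k^β (1−y_k)^α · ∏_{i<j}(y_j − y_i) · det[₁F₁(a;b;θ_j y_i)]`
equals `det[φ_i(x,θ_j)]` with `φ_i(x,θ_j) = ∫₀ˣ y^{β+i−1}(1−y)^α ₁F₁(a;b;θ_j y) dy`. -/
theorem ordered_integral_det (m : ℕ) (hm : 1 ≤ m)
    (x : ℝ) (hx : x ∈ Set.Ioo (0 : ℝ) 1)
    (a b : ℝ) (hb : 0 < b) (β α : ℕ)
    (θ : Fin m → ℝ) (hθ : StrictMono θ) :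
    (∫ y in {y : Fin m → ℝ | StrictMono y ∧ ∀ k, y k ∈ Set.Ioo 0 x},
        (∏ k, y k ^ β * (1 - y k) ^ α)
          * (∏ i : Fin m, ∏ j ∈ Finset.univ.filter (fun j => i < j), (y j - y i))
          * Matrix.det (Matrix.of fun i j : Fin m => oneF1 a b (θ j * y i)))
      = Matrix.det (Matrix.of fun i j : Fin m =>
          ∫ y in Set.Ioc (0 : ℝ) x,
            y ^ (β + (i : ℕ)) * (1 - y) ^ α * oneF1 a b (θ j * y)) := by
  set ν : Measure ℝ := volume.restrict (Set.Ioo 0 x) with hν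
  have hF := oneF1_continuous a b hb
  have hpi : (volume : Measure (Fin m → ℝ)).restrict (Set.univ.pi fun _ => Set.Ioo 0 x)
      = Measure.pi fun _ : Fin m => ν :=
    Measure.restrict_pi_pi (fun _ => (volume : Measure ℝ)) (fun _ => Set.Ioo 0 x)
  have hac : ∀ᵐ y ∂(Measure.pi fun _ : Fin m => ν), Function.Injective y := by
    rw [← hpi]
    exact ae_restrict_of_ae (ae_injective m)
  have key := andreief m ν hac (fun i t => t ^ (β + (i : ℕ)) * (1 - t) ^ α)
    (fun j t => oneF1 a b (θ j * t)) (by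
      intro i j
      have hc : Continuous fun t : ℝ =>
          t ^ (β + (i : ℕ)) * (1 - t) ^ α * oneF1 a b (θ j * t) := by fun_prop
      exact (hc.integrableOn_Icc (a := 0) (b := x)).mono_set Set.Ioo_subset_Icc_self)
  simp only [integral_Ioc_eq_integral_Ioo]
  rw [← key, ← hpi, Measure.restrict_restrict (measurableSet_strictMono m)]
  have hset : {y : Fin m → ℝ | StrictMono y ∧ ∀ k, y k ∈ Set.Ioo 0 x} =
      {y : Fin m → ℝ | StrictMono y} ∩ (Set.univ.pi fun _ => Set.Ioo 0 x) := by
    ext y; simp [Set.mem_pi]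
  rw [hset]
  congr 1
  funext y
  congr 1
  have h1 : (Matrix.of fun i j : Fin m => y i ^ (β + (j : ℕ)) * (1 - y i) ^ α) =
      Matrix.of fun i j : Fin m => (y i ^ β * (1 - y i) ^ α) * Matrix.vandermonde y i j := by
    ext i j
    simp only [Matrix.of_apply, Matrix.vandermonde_apply, pow_add]
    ring
  rw [h1, Matrix.det_mul_column, Matrix.det_vandermonde]
  congr 1
  refine Finset.prod_congr rfl fun i _ => Finset.prod_congr ?_ fun _ _ => rfl
  ext j
  simp
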